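/- arXiv:2511.21617 — 13 statements merged into one kernel-verified Lean document; each statement's English description precedes it below -/
import Mathlib

section
/- Let R be a commutative ring and let M be a 2×2 matrix over R with det(M) = 1 and trace(M) = x. Then for every natural number k, the trace of M^k equals 𝒯_k(x), the k-th dilated Chebyshev polynomial of the first kind evaluated at x. -/
/-!
By Cayley-Hamilton, a 2×2 matrix `M` of determinant one and trace `x` satisfies
`M ^ 2 = x • M - 1` (`sq_eq_trace_smul_sub_one`). Multiplying by `M ^ k` and taking traces,
`k ↦ trace (M ^ k)` satisfies the recurrence defining the dilated Chebyshev polynomials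
evaluated at `x`, with the same initial values `2` and `x`.
-/

open Polynomial

/-- The dilated Chebyshev polynomials of the first kind:
`𝒯_{k+2} = x·𝒯_{k+1} − 𝒯_k`, `𝒯_0 = 2`, `𝒯_1 = x`. -/
noncomputable def dilChebT (R : Type*) [CommRing R] : ℕ → Polynomial R
  | 0 => 2
  | 1 => X
  | k + 2 => X * dilChebT R (k + 1) - dilChebT R k

/-- Cayley-Hamilton for a 2×2 matrix of determinant one, verified entrywise so that no
nontriviality assumption on `R` is needed. -/
lemma sq_eq_trace_smul_sub_one {R : Type*} [CommRing R]
    (M : Matrix (Fin 2) (Fin 2) R) (hdet : M.det = 1) :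
    M ^ 2 = M.trace • M - 1 := by
  rw [Matrix.det_fin_two] at hdet
  ext i j
  fin_cases i <;> fin_cases j <;>
    simp [pow_two, Matrix.mul_apply, Fin.sum_univ_two, Matrix.trace_fin_two]
  -- the diagonal entries use the determinant, the off-diagonal ones are identities
  · linear_combination -hdet
  · ring
  · ring
  · linear_combination -hdet

/-- If `M` is a 2×2 matrix over a commutative ring with `det M = 1` and `trace M = x`,
then `trace (M^k) = 𝒯_k(x)`. -/
theorem trace_pow_eq_dilChebT {R : Type*} [CommRing R]
    (M : Matrix (Fin 2) (Fin 2) R) (x : R)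
    (hdet : M.det = 1) (htr : M.trace = x) (k : ℕ) :
    (M ^ k).trace = (dilChebT R k).eval x := by
  induction k using Nat.twoStepInduction with
  | zero => simp [dilChebT]
  | one => simp [dilChebT, htr]
  | more k ih0 ih1 =>
    have h : M ^ (k + 2) = x • M ^ (k + 1) - M ^ k := by
      rw [pow_add, sq_eq_trace_smul_sub_one M hdet, htr, mul_sub, mul_one, mul_smul_comm,
        ← pow_succ]
    rw [h, Matrix.trace_sub, Matrix.trace_smul, ih0, ih1]
    simp [dilChebT]
end

section
/- Let R be a commutative ring and let M be a 2×2 matrix over R with det(M) = −1 and trace(M) = x. Then for every natural number k, the trace of M^k equals 𝒯̄_k(x), the k-th sign-changed dilated Chebyshev polynomial of the first kind evaluated at x. -/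
/-!
By Cayley–Hamilton, `M ^ 2 = x • M + 1` when `trace M = x` and `det M = -1`. Multiplying by `M ^ k`
and taking traces, the sequence `trace (M ^ k)` satisfies the recurrence defining `𝒯̄_k(x)`, with the
same initial values `trace 1 = 2` and `trace M = x`.
-/

open Polynomial

/-- The sign-changed dilated Chebyshev polynomials of the first kind:
`𝒯̄_{k+2} = x·𝒯̄_{k+1} + 𝒯̄_k`, `𝒯̄_0 = 2`, `𝒯̄_1 = x`. -/
noncomputable def dilChebTBar (R : Type*) [CommRing R] : ℕ → Polynomial R
  | 0 => 2
  | 1 => X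
  | k + 2 => X * dilChebTBar R (k + 1) + dilChebTBar R k

/-- If `M` is a 2×2 matrix over a commutative ring with `det M = −1` and `trace M = x`,
then `trace (M^k) = 𝒯̄_k(x)`. -/
theorem trace_pow_eq_dilChebTBar {R : Type*} [CommRing R]
    (M : Matrix (Fin 2) (Fin 2) R) (x : R)
    (hdet : M.det = -1) (htr : M.trace = x) (k : ℕ) :
    (M ^ k).trace = (dilChebTBar R k).eval x := by
  -- Cayley–Hamilton, checked entrywise: this also covers the trivial ring.
  have hM : M ^ 2 = x • M + 1 := by
    rw [Matrix.det_fin_two] at hdet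
    rw [Matrix.trace_fin_two] at htr
    subst htr
    ext i j
    fin_cases i <;> fin_cases j <;>
      simp [pow_two, Matrix.mul_apply, Fin.sum_univ_two] <;> grind
  induction k using Nat.twoStepInduction with
  | zero => simp [dilChebTBar]
  | one => simpa [dilChebTBar] using htr
  | more k ih₀ ih₁ =>
    have hrec : M ^ (k + 2) = x • M ^ (k + 1) + M ^ k := by
      rw [pow_add, hM, mul_add, mul_smul_comm, ← pow_succ, mul_one]
    simp [hrec, ih₀, ih₁, dilChebTBar]
end

section
/- For every natural number k, the polynomial identities V_k(−T_2(x)) = (−1)^k · U_{2k}(x) and x · W_k(−T_2(x)) = (−1)^k · T_{2k+1}(x) hold. -/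
/-!
Any solution of `f_{n+2} = 2x·f_{n+1} − f_n` satisfies `f_{n+4} = 2·T_2·f_{n+2} − f_n`
(`chebyshev_recurrence_step_two`), so `n ↦ U_{2n}` and `n ↦ T_{2n+1}` obey the Chebyshev recurrence
with `x` replaced by `T_2`. The sign `(−1)^n` turns `T_2` into `−T_2`, which gives the recurrence
obtained by substituting `−T_2` in that of `V` and `W`. Both sides of each identity therefore solve
the same second-order recurrence, and they agree for `k = 0, 1`.
-/

open Polynomial

/-- Chebyshev polynomials of the first kind:
`T_{k+2} = 2x·T_{k+1} − T_k`, `T_0 = 1`, `T_1 = x`. -/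
noncomputable def chebT (R : Type*) [CommRing R] : ℕ → Polynomial R
  | 0 => 1
  | 1 => X
  | k + 2 => 2 * X * chebT R (k + 1) - chebT R k

/-- Chebyshev polynomials of the second kind:
`U_{k+2} = 2x·U_{k+1} − U_k`, `U_0 = 1`, `U_1 = 2x`. -/
noncomputable def chebU (R : Type*) [CommRing R] : ℕ → Polynomial R
  | 0 => 1
  | 1 => 2 * X
  | k + 2 => 2 * X * chebU R (k + 1) - chebU R k

/-- Chebyshev polynomials of the third kind:
`V_{k+2} = 2x·V_{k+1} − V_k`, `V_0 = 1`, `V_1 = 2x − 1`. -/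
noncomputable def chebV (R : Type*) [CommRing R] : ℕ → Polynomial R
  | 0 => 1
  | 1 => 2 * X - 1
  | k + 2 => 2 * X * chebV R (k + 1) - chebV R k

/-- Chebyshev polynomials of the fourth kind:
`W_{k+2} = 2x·W_{k+1} − W_k`, `W_0 = 1`, `W_1 = 2x + 1`. -/
noncomputable def chebW (R : Type*) [CommRing R] : ℕ → Polynomial R
  | 0 => 1
  | 1 => 2 * X + 1
  | k + 2 => 2 * X * chebW R (k + 1) - chebW R k

/-- Taking every second term of a Chebyshev-type sequence replaces the multiplier `x` by `T_2`. -/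
theorem chebyshev_recurrence_step_two {R : Type*} [CommRing R] {f : ℕ → Polynomial R}
    (hf : ∀ n, f (n + 2) = 2 * X * f (n + 1) - f n) (n : ℕ) :
    f (n + 4) = 2 * chebT R 2 * f (n + 2) - f n := by
  have h₂ := hf n
  have h₃ := hf (n + 1)
  have h₄ := hf (n + 2)
  simp only [chebT]
  linear_combination h₄ + 2 * X * h₃ + h₂

/-- `V_k(−T_2(x)) = (−1)^k · U_{2k}(x)` and `x·W_k(−T_2(x)) = (−1)^k · T_{2k+1}(x)`. -/
theorem chebV_chebW_comp_neg_chebT_two {R : Type*} [CommRing R] (k : ℕ) :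
    (chebV R k).comp (-(chebT R 2)) = (-1) ^ k * chebU R (2 * k) ∧
    X * (chebW R k).comp (-(chebT R 2)) = (-1) ^ k * chebT R (2 * k + 1) := by
  have hU (n : ℕ) := chebyshev_recurrence_step_two (f := chebU R) (fun _ => by rw [chebU]) n
  have hT (n : ℕ) := chebyshev_recurrence_step_two (f := chebT R) (fun _ => by rw [chebT]) n
  induction k using Nat.twoStepInduction with
  | zero => simp [chebV, chebW, chebU, chebT]
  | one =>
    constructor
    · simp [chebV, chebU, chebT]
      ring
    · simp [chebW, chebT]
      ring
  | more k ih₀ ih₁ =>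
    have hU' : chebU R (2 * (k + 2)) =
        2 * chebT R 2 * chebU R (2 * (k + 1)) - chebU R (2 * k) := hU (2 * k)
    have hT' : chebT R (2 * (k + 2) + 1) =
        2 * chebT R 2 * chebT R (2 * (k + 1) + 1) - chebT R (2 * k + 1) := hT (2 * k + 1)
    have hV : (chebV R (k + 2)).comp (-(chebT R 2)) =
        2 * -(chebT R 2) * (chebV R (k + 1)).comp (-(chebT R 2)) -
          (chebV R k).comp (-(chebT R 2)) := by
      rw [chebV]
      simp
    have hW : (chebW R (k + 2)).comp (-(chebT R 2)) =
        2 * -(chebT R 2) * (chebW R (k + 1)).comp (-(chebT R 2)) -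
          (chebW R k).comp (-(chebT R 2)) := by
      rw [chebW]
      simp
    constructor
    · rw [hV, hU', ih₀.1, ih₁.1]
      ring
    · rw [hW, hT']
      linear_combination 2 * -(chebT R 2) * ih₁.2 - ih₀.2
end

section
/- For every natural number k, the polynomial identities V_k(T̄_2(x)) = Ū_{2k}(x) and x · W_k(T̄_2(x)) = T̄_{2k+1}(x) hold. -/
/-!
A sequence with `a (n + 2) = 2x · a (n + 1) + a n` satisfies
`a (n + 4) = 2 (2x² + 1) · a (n + 2) - a n` along indices of a fixed parity, and
`2x² + 1 = T̄_2`. This is the recurrence of `V` and `W` evaluated at `T̄_2`, so both identities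
follow by two-step induction from their cases `k = 0` and `k = 1`.
-/

open Polynomial

/-- Sign-changed Chebyshev polynomials of the first kind:
`T̄_{k+2} = 2x·T̄_{k+1} + T̄_k`, `T̄_0 = 1`, `T̄_1 = x`. -/
noncomputable def chebTBar (R : Type*) [CommRing R] : ℕ → Polynomial R
  | 0 => 1
  | 1 => X
  | k + 2 => 2 * X * chebTBar R (k + 1) + chebTBar R k

/-- Sign-changed Chebyshev polynomials of the second kind:
`Ū_{k+2} = 2x·Ū_{k+1} + Ū_k`, `Ū_0 = 1`, `Ū_1 = 2x`. -/
noncomputable def chebUBar (R : Type*) [CommRing R] : ℕ → Polynomial R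
  | 0 => 1
  | 1 => 2 * X
  | k + 2 => 2 * X * chebUBar R (k + 1) + chebUBar R k

theorem chebTBar_two (R : Type*) [CommRing R] : chebTBar R 2 = 2 * X ^ 2 + 1 := by
  simp only [chebTBar]
  ring

/-- Eliminating the terms of odd offset from a sign-changed Chebyshev recurrence. -/
theorem add_four_of_rec {R : Type*} [CommRing R] (a : ℕ → Polynomial R)
    (ha : ∀ n, a (n + 2) = 2 * X * a (n + 1) + a n) (n : ℕ) :
    a (n + 4) = 2 * (2 * X ^ 2 + 1) * a (n + 2) - a n := by
  have h0 := ha n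
  have h1 := ha (n + 1)
  have h2 := ha (n + 2)
  linear_combination h2 + 2 * X * h1 - h0

theorem chebV_comp (R : Type*) [CommRing R] (k : ℕ) :
    (chebV R k).comp (2 * X ^ 2 + 1) = chebUBar R (2 * k) := by
  induction k using Nat.twoStepInduction with
  | zero => simp [chebV, chebUBar]
  | one =>
    simp [chebV, chebUBar]
    ring
  | more k ih0 ih1 =>
    have h := add_four_of_rec (chebUBar R) (fun n => by rw [chebUBar]) (2 * k)
    rw [show 2 * (k + 2) = 2 * k + 4 by ring, h, chebV]
    rw [show 2 * (k + 1) = 2 * k + 2 by ring] at ih1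
    simp [ih0, ih1]

theorem X_mul_chebW_comp (R : Type*) [CommRing R] (k : ℕ) :
    X * (chebW R k).comp (2 * X ^ 2 + 1) = chebTBar R (2 * k + 1) := by
  induction k using Nat.twoStepInduction with
  | zero => simp [chebW, chebTBar]
  | one =>
    simp [chebW, chebTBar]
    ring
  | more k ih0 ih1 =>
    have h := add_four_of_rec (chebTBar R) (fun n => by rw [chebTBar]) (2 * k + 1)
    rw [show 2 * (k + 2) + 1 = 2 * k + 1 + 4 by ring, h, chebW]
    rw [show 2 * (k + 1) + 1 = 2 * k + 1 + 2 by ring] at ih1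
    rw [← ih0, ← ih1]
    simp
    ring

/-- `V_k(T̄_2(x)) = Ū_{2k}(x)` and `x·W_k(T̄_2(x)) = T̄_{2k+1}(x)`. -/
theorem chebV_chebW_comp_chebTBar_two {R : Type*} [CommRing R] (k : ℕ) :
    (chebV R k).comp (chebTBar R 2) = chebUBar R (2 * k) ∧
    X * (chebW R k).comp (chebTBar R 2) = chebTBar R (2 * k + 1) := by
  rw [chebTBar_two]
  exact ⟨chebV_comp R k, X_mul_chebW_comp R k⟩
end

section
/- For all natural numbers k and l ≥ 1, the polynomial identity T_l(x) · W_k(−T_{2l}(x)) = (−1)^k · T_{(2k+1)l}(x) holds. -/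
/-! The sequences `k ↦ T_l · W_k(−T_{2l})` and `k ↦ (−1)^k T_{(2k+1)l}` satisfy the same
second-order recurrence `u_{k+2} = −2 T_{2l} u_{k+1} − u_k`: for the first this is the recurrence
of `W` evaluated at `−T_{2l}`, for the second it is the product formula
`2 T_m T_{m+d} = T_{2m+d} + T_d` with `m = 2l`, `d = (2k+1)l`. The product formula with `m = d = l`
shows that they agree at `k = 1`; at `k = 0` both are `T_l`. -/

open Polynomial

/-- Product formula `2 cos a cos b = cos (a + b) + cos (a - b)` for the polynomials `T`, with the
indices written as `m` and `m + d` to avoid truncated subtraction. -/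
theorem two_mul_chebT_mul_chebT_add {R : Type*} [CommRing R] (m d : ℕ) :
    2 * chebT R m * chebT R (m + d) = chebT R (2 * m + d) + chebT R d := by
  induction m using Nat.twoStepInduction generalizing d with
  | zero => simp [chebT, two_mul]
  | one =>
    rw [show 1 + d = d + 1 by ring, show 2 * 1 + d = d + 2 by ring, chebT, chebT]
    ring
  | more m ih0 ih1 =>
    have h0 := ih0 (d + 2)
    have h1 := ih1 (d + 1)
    have e1 : chebT R (d + 2) = 2 * X * chebT R (d + 1) - chebT R d := by rw [chebT]
    have e2 : chebT R (2 * m + d + 4) =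
        2 * X * chebT R (2 * m + d + 3) - chebT R (2 * m + d + 2) := by rw [chebT]
    have e3 : chebT R (m + 2) = 2 * X * chebT R (m + 1) - chebT R m := by rw [chebT]
    rw [show m + (d + 2) = m + d + 2 by ring, show 2 * m + (d + 2) = 2 * m + d + 2 by ring] at h0
    rw [show m + 1 + (d + 1) = m + d + 2 by ring,
      show 2 * (m + 1) + (d + 1) = 2 * m + d + 3 by ring] at h1
    rw [show m + 2 + d = m + d + 2 by ring, show 2 * (m + 2) + d = 2 * m + d + 4 by ring, e2, e3]
    linear_combination 2 * X * h1 - h0 - e1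

/-- `T_l(x)·W_k(−T_{2l}(x)) = (−1)^k · T_{(2k+1)l}(x)` for `l ≥ 1`. -/
theorem chebT_mul_chebW_comp_neg_chebT {R : Type*} [CommRing R] (k l : ℕ) (hl : 1 ≤ l) :
    chebT R l * (chebW R k).comp (-(chebT R (2 * l))) = (-1) ^ k * chebT R ((2 * k + 1) * l) := by
  induction k using Nat.twoStepInduction with
  | zero => simp [chebW]
  | one =>
    have h := two_mul_chebT_mul_chebT_add (R := R) l l
    rw [← two_mul, show 2 * l + l = (2 * 1 + 1) * l by ring] at h
    simp only [chebW, add_comp, mul_comp, X_comp, one_comp, ofNat_comp]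
    linear_combination -h
  | more k ih0 ih1 =>
    have h := two_mul_chebT_mul_chebT_add (R := R) (2 * l) ((2 * k + 1) * l)
    rw [show 2 * l + (2 * k + 1) * l = (2 * (k + 1) + 1) * l by ring,
      show 2 * (2 * l) + (2 * k + 1) * l = (2 * (k + 2) + 1) * l by ring] at h
    simp only [chebW, sub_comp, mul_comp, X_comp, ofNat_comp]
    linear_combination -2 * chebT R (2 * l) * ih1 - ih0 + (-1) ^ k * h
end

section
/- Let F be a field, let c : ℕ → F, let r ≥ 0 and l ≥ 1 be natural numbers such that c_{i+l} = c_i for all i > r, and let Ψ_n denote the product of the matrices [[c_0,1],[1,0]]·[[c_1,1],[1,0]]⋯[[c_n,1],[1,0]]. Then for all n ≥ r and all natural numbers k ≥ 1, one has Ψ_{n+2kl} = Tr(Ψ_n⁻¹·Ψ_{n+kl})·Ψ_{n+kl} − (−1)^{kl}·Ψ_n. -/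
/-!
Split `Ψ_{n+m} = Ψ_n · W`, where `W` is the product of the `m` elementary matrices with indices
`n+1, …, n+m`. For `m = kl` and `n ≥ r`, periodicity makes the next `m` factors multiply to the
same `W`, so `Ψ_{n+2m} = Ψ_n · W²`. As `W = Ψ_n⁻¹ Ψ_{n+m}` and `det W = (-1)^m`, the claim is
Cayley–Hamilton, `W² = Tr(W) W - det(W) I`, multiplied on the left by `Ψ_n`.
-/

/-- The elementary continued-fraction matrix `[[a,1],[1,0]]`. -/
def cfMat {F : Type*} [Field F] (a : F) : Matrix (Fin 2) (Fin 2) F := !![a, 1; 1, 0]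

/-- `Ψ_n = [[c_0,1],[1,0]]·[[c_1,1],[1,0]]⋯[[c_n,1],[1,0]]`, the matrix of convergents. -/
def cfPsi {F : Type*} [Field F] (c : ℕ → F) (n : ℕ) : Matrix (Fin 2) (Fin 2) F :=
  ((List.range (n + 1)).map fun i => cfMat (c i)).prod

/-- The product of the `m` consecutive elementary matrices with indices `s, …, s + m - 1`. -/
def cfWindow {F : Type*} [Field F] (c : ℕ → F) (s m : ℕ) : Matrix (Fin 2) (Fin 2) F :=
  ((List.range m).map fun i => cfMat (c (s + i))).prod

theorem cfWindow_succ {F : Type*} [Field F] (c : ℕ → F) (s m : ℕ) :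
    cfWindow c s (m + 1) = cfWindow c s m * cfMat (c (s + m)) := by
  simp [cfWindow, List.range_succ]

theorem cfPsi_eq_cfWindow {F : Type*} [Field F] (c : ℕ → F) (n : ℕ) :
    cfPsi c n = cfWindow c 0 (n + 1) := by
  simp [cfPsi, cfWindow]

theorem det_cfWindow {F : Type*} [Field F] (c : ℕ → F) (s m : ℕ) :
    (cfWindow c s m).det = (-1) ^ m := by
  induction m with
  | zero => simp [cfWindow]
  | succ m ih =>
    rw [cfWindow_succ, Matrix.det_mul, ih, pow_succ]
    simp [cfMat, Matrix.det_fin_two]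

theorem cfPsi_add {F : Type*} [Field F] (c : ℕ → F) (n m : ℕ) :
    cfPsi c (n + m) = cfPsi c n * cfWindow c (n + 1) m := by
  induction m with
  | zero => simp [cfWindow]
  | succ m ih =>
    rw [cfWindow_succ, ← mul_assoc, ← ih, cfPsi_eq_cfWindow, cfPsi_eq_cfWindow,
      ← add_assoc, cfWindow_succ]
    congr 3
    omega

/-- Cayley–Hamilton for `2 × 2` matrices. -/
theorem mul_self_eq_trace_smul_sub_det {F : Type*} [Field F] (W : Matrix (Fin 2) (Fin 2) F) :
    W * W = W.trace • W - W.det • (1 : Matrix (Fin 2) (Fin 2) F) := by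
  ext i j
  fin_cases i <;> fin_cases j <;>
    simp [Matrix.mul_apply, Matrix.trace_fin_two, Matrix.det_fin_two] <;> ring

/-- For an eventually periodic sequence of partial quotients (period `l`, run-up `r`),
`Ψ_{n+2kl} = Tr(Ψ_n⁻¹·Ψ_{n+kl})·Ψ_{n+kl} − (−1)^{kl}·Ψ_n` for all `n ≥ r`, `k ≥ 1`. -/
theorem cfPsi_add_two_mul_eq {F : Type*} [Field F] (c : ℕ → F) (r l : ℕ) (hl : 1 ≤ l)
    (hper : ∀ i, r < i → c (i + l) = c i) (n k : ℕ) (hn : r ≤ n) (hk : 1 ≤ k) :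
    cfPsi c (n + 2 * k * l) =
      Matrix.trace ((cfPsi c n)⁻¹ * cfPsi c (n + k * l)) • cfPsi c (n + k * l)
        - ((-1 : F) ^ (k * l)) • cfPsi c n := by
  have hperk : ∀ j i, r < i → c (i + j * l) = c i := by
    intro j
    induction j with
    | zero => simp
    | succ j ih =>
      intro i hi
      rw [add_mul, one_mul, ← add_assoc, hper _ (by omega), ih i hi]
  have hW : cfWindow c (n + k * l + 1) (k * l) = cfWindow c (n + 1) (k * l) := by
    unfold cfWindow
    congr 2
    funext i
    rw [show n + k * l + 1 + i = n + 1 + i + k * l by ring, hperk k _ (by omega)]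
  have hdet : IsUnit (cfPsi c n).det := by
    rw [cfPsi_eq_cfWindow, det_cfWindow]
    exact isUnit_one.neg.pow _
  rw [show n + 2 * k * l = n + k * l + k * l by ring, cfPsi_add c (n + k * l), hW,
    cfPsi_add c n, Matrix.nonsing_inv_mul_cancel_left _ _ hdet, mul_assoc,
    mul_self_eq_trace_smul_sub_det, det_cfWindow, mul_sub, Matrix.mul_smul, Matrix.mul_smul,
    mul_one]
end

section
/- Let F be a field, let c : ℕ → F, let r ≥ 0 and l ≥ 1 be natural numbers such that c_{i+l} = c_i for all i > r, and let Ψ_n denote the product of the matrices [[c_0,1],[1,0]]·[[c_1,1],[1,0]]⋯[[c_n,1],[1,0]]. Then for every natural number k ≥ 1, the trace t_k := Tr(Ψ_n⁻¹·Ψ_{n+kl}) does not depend on n for n ≥ r; that is, Tr(Ψ_n⁻¹·Ψ_{n+kl}) = Tr(Ψ_r⁻¹·Ψ_{r+kl}) for all n ≥ r. -/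
theorem cfPsi_succ {F : Type*} [Field F] (c : ℕ → F) (n : ℕ) :
    cfPsi c (n + 1) = cfPsi c n * cfMat (c (n + 1)) := by
  unfold cfPsi
  rw [List.range_succ, List.map_append, List.prod_append]
  simp

theorem cfMat_isUnit_det {F : Type*} [Field F] (a : F) : IsUnit (cfMat a).det := by
  simp [cfMat, Matrix.det_fin_two_of]

theorem apply_add_mul_period {F : Type*} (c : ℕ → F) (r l : ℕ)
    (hper : ∀ i, r < i → c (i + l) = c i) (k i : ℕ) (hi : r < i) :
    c (i + k * l) = c i := by
  induction k with
  | zero => simp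
  | succ k ih =>
    rw [Nat.succ_mul, ← Nat.add_assoc, hper _ (by omega), ih]

/-- For an eventually periodic sequence of partial quotients (period `l`, run-up `r`),
the trace `t_k = Tr(Ψ_n⁻¹·Ψ_{n+kl})` does not depend on `n ≥ r`. -/
theorem cfPsi_trace_indep {F : Type*} [Field F] (c : ℕ → F) (r l : ℕ) (hl : 1 ≤ l)
    (hper : ∀ i, r < i → c (i + l) = c i) (k : ℕ) (hk : 1 ≤ k) (n : ℕ) (hn : r ≤ n) :
    Matrix.trace ((cfPsi c n)⁻¹ * cfPsi c (n + k * l)) =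
      Matrix.trace ((cfPsi c r)⁻¹ * cfPsi c (r + k * l)) := by
  induction n, hn using Nat.le_induction with
  | base => rfl
  | succ n hn ih =>
    rw [← ih, show n + 1 + k * l = n + k * l + 1 by ring, cfPsi_succ, cfPsi_succ,
      show n + k * l + 1 = n + 1 + k * l by ring,
      apply_add_mul_period c r l hper k (n + 1) (by omega), Matrix.mul_inv_rev,
      Matrix.mul_assoc, Matrix.trace_mul_comm, ← Matrix.mul_assoc, Matrix.mul_assoc,
      Matrix.mul_nonsing_inv _ (cfMat_isUnit_det _), Matrix.mul_one]
end

section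
/- For all natural numbers k and l, the polynomial identity 𝒯^l_{2k+1}(x) = 𝒯^l_k(x)·𝒯^l_{k+1}(x) − (−1)^{kl}·x holds. -/
/-!
Both families are Lucas-type sequences `a_{n+2} = x a_{n+1} - q a_n`, `a_0 = 2`, `a_1 = x`, with
`q = (-1)^l`. Writing `a_n = α^n + β^n` with `α + β = x` and `αβ = q`, one expects
`a_m a_{m+j} = a_{2m+j} + q^m a_j`; `lucas_mul_add` proves this over any commutative ring by
two-step induction on `m`. The claim is the case `m = k`, `j = 1`.
-/

open Polynomial

/-- The signed dilated Chebyshev polynomial of the first kind `𝒯^l_k`: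
equals `𝒯_k` when `l` is even and `𝒯̄_k` when `l` is odd. -/
noncomputable def dilChebTSigned (R : Type*) [CommRing R] (l k : ℕ) : Polynomial R :=
  if Even l then dilChebT R k else dilChebTBar R k

/-- The product formula `a_m a_{m+j} = a_{2m+j} + q^m a_j` for any sequence with
`a_{n+2} = x a_{n+1} - q a_n` and `a_0 = 2`, `a_1 = x`. -/
theorem lucas_mul_add {A : Type*} [CommRing A] (x q : A) (a : ℕ → A) (h0 : a 0 = 2)
    (h1 : a 1 = x) (h : ∀ n, a (n + 2) = x * a (n + 1) - q * a n) (m : ℕ) :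
    ∀ j, a m * a (m + j) = a (2 * m + j) + q ^ m * a j := by
  induction m using Nat.twoStepInduction with
  | zero => intro j; simp [h0, two_mul]
  | one =>
    intro j
    have e := h j
    rw [h1, show 1 + j = j + 1 by ring, show 2 * 1 + j = j + 2 by ring, e]
    ring
  | more m ih0 ih1 =>
    intro j
    have e1 := ih1 (j + 1)
    have e0 := ih0 (j + 2)
    have r1 := h (2 * m + j + 2)
    have r2 := h j
    rw [show m + 1 + (j + 1) = m + 2 + j by ring,
      show 2 * (m + 1) + (j + 1) = 2 * m + j + 2 + 1 by ring] at e1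
    rw [show m + (j + 2) = m + 2 + j by ring,
      show 2 * m + (j + 2) = 2 * m + j + 2 by ring] at e0
    rw [show 2 * (m + 2) + j = 2 * m + j + 2 + 2 by ring, h m]
    linear_combination x * e1 - q * e0 - r1 - q ^ (m + 1) * r2

theorem dilChebTSigned_add_two (R : Type*) [CommRing R] (l n : ℕ) :
    dilChebTSigned R l (n + 2) =
      X * dilChebTSigned R l (n + 1) - (-1) ^ l * dilChebTSigned R l n := by
  unfold dilChebTSigned
  split_ifs with hl
  · rw [hl.neg_one_pow, dilChebT, one_mul]
  · rw [(Nat.not_even_iff_odd.mp hl).neg_one_pow, dilChebTBar]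
    ring

/-- `𝒯^l_{2k+1}(x) = 𝒯^l_k(x)·𝒯^l_{k+1}(x) − (−1)^{kl}·x`. -/
theorem dilChebTSigned_two_mul_add_one {R : Type*} [CommRing R] (k l : ℕ) :
    dilChebTSigned R l (2 * k + 1) =
      dilChebTSigned R l k * dilChebTSigned R l (k + 1) - (-1) ^ (k * l) * X := by
  have h0 : dilChebTSigned R l 0 = 2 := by
    simp [dilChebTSigned, dilChebT, dilChebTBar]
  have h1 : dilChebTSigned R l 1 = X := by
    simp [dilChebTSigned, dilChebT, dilChebTBar]
  have e := lucas_mul_add X ((-1) ^ l) (dilChebTSigned R l) h0 h1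
    (dilChebTSigned_add_two R l) k 1
  rw [h1, ← pow_mul, mul_comm l k] at e
  rw [e, add_sub_cancel_right]
end

section
/- Let F be a field, let c : ℕ → F, let l ≥ 2 be a natural number such that c_{l−i} = c_i for all 1 ≤ i ≤ l−1 (palindromic period) and c_l = 2c_0. Let Ψ_n denote the product [[c_0,1],[1,0]]·[[c_1,1],[1,0]]⋯[[c_n,1],[1,0]], and write p_n = (Ψ_n)_{1,1}, q_n = (Ψ_n)_{2,1}. Then Tr(Ψ_0⁻¹·Ψ_l) = 2·p_{l−1}. -/
/-- The numerator `p_n` of the `n`-th convergent. -/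
def cfP {F : Type*} [Field F] (c : ℕ → F) (n : ℕ) : F := cfPsi c n 0 0

/-- The product of the elementary matrices of a palindromic list is symmetric. -/
lemma cfMat_prod_transpose {F : Type*} [Field F] (L : List F) (hL : L.reverse = L) :
    (L.map cfMat).prod.transpose = (L.map cfMat).prod := by
  have hsymm : ∀ a : F, (cfMat a).transpose = cfMat a := by
    intro a
    ext i j
    fin_cases i <;> fin_cases j <;> rfl
  rw [Matrix.transpose_list_prod, List.map_map, ← List.map_reverse, hL]
  congr 1
  exact List.map_congr_left fun a _ => hsymm a

/-- For a palindromic period `c_{l−i} = c_i` (`1 ≤ i ≤ l−1`) with `c_l = 2c_0`,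
one has `Tr(Ψ_0⁻¹·Ψ_l) = 2·p_{l−1}`. -/
theorem cfPsi_trace_eq_two_mul_p {F : Type*} [Field F] (c : ℕ → F) (l : ℕ) (hl : 2 ≤ l)
    (hpal : ∀ i, 1 ≤ i → i ≤ l - 1 → c (l - i) = c i) (hcl : c l = 2 * c 0) :
    Matrix.trace ((cfPsi c 0)⁻¹ * cfPsi c l) = 2 * cfP c (l - 1) := by
  obtain ⟨m, rfl⟩ : ∃ m, l = m + 1 := ⟨l - 1, by omega⟩
  set L : List F := (List.range m).map fun i => c (i + 1) with hLdef
  have hL : L.reverse = L := by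
    apply List.ext_getElem
    · simp
    · intro i h₁ h₂
      simp only [hLdef, List.length_map, List.length_range] at h₂
      simp only [hLdef, List.getElem_reverse, List.getElem_map, List.getElem_range,
        List.length_map, List.length_range]
      rw [← hpal (i + 1) (by omega) (by omega)]
      congr 1
      omega
  have hM := cfMat_prod_transpose L hL
  have hinit : cfPsi c m = cfMat (c 0) * (L.map cfMat).prod := by
    simp [cfPsi, hLdef, List.range_succ_eq_map, Function.comp_def]
  have hlast : cfPsi c (m + 1) = cfPsi c m * cfMat (c (m + 1)) := by
    simp [cfPsi, List.range_succ, mul_assoc]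
  have hzero : cfPsi c 0 = cfMat (c 0) := by simp [cfPsi]
  have hdet : IsUnit (cfMat (c 0)).det := by simp [cfMat, Matrix.det_fin_two]
  have hentry := congrFun (congrFun hM 0) 1
  rw [Matrix.transpose_apply] at hentry
  rw [Nat.add_sub_cancel, cfP, hlast, hinit, hzero, mul_assoc,
    Matrix.nonsing_inv_mul_cancel_left _ _ hdet, hcl]
  generalize (L.map cfMat).prod = M at hentry ⊢
  simp [Matrix.trace_fin_two, Matrix.mul_apply, Fin.sum_univ_two, cfMat]
  rw [hentry]
  ring
end

section
/- Let F be a field, let c : ℕ → F, let l ≥ 2 be a natural number such that c_{i+l} = c_i for all i ≥ 1, c_{l−i} = c_i for all 1 ≤ i ≤ l−1 (palindromic period), and c_l = 2c_0. Let Ψ_n denote the product [[c_0,1],[1,0]]·[[c_1,1],[1,0]]⋯[[c_n,1],[1,0]], with Ψ_{−1} the identity matrix, and write p_n = (Ψ_n)_{1,1}, q_n = (Ψ_n)_{2,1} for n ≥ −1 (so p_{−1} = 1, q_{−1} = 0). Then for every natural number k ≥ 1, p_{kl−1} = T^l_k(p_{l−1}) and q_{kl−1} = q_{l−1}·U^l_{k−1}(p_{l−1}).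 -/
/-!
Write `L` for the shear `[[1, c_0], [0, 1]]` and `W` for the product of `cfMat c_i` over
`1 ≤ i ≤ l - 1`. Since `cfMat (2 c_0) = L * cfMat c_0`, periodicity gives
`Ψ_{kl-1} * L = B ^ k` with `B = cfMat c_0 * W * L` (`cfPartial_mul_cfShear`). Right
multiplication by `L` does not change the first column, so `p_{kl-1}` and `q_{kl-1}` are the
entries of the first column of `B ^ k`.

The palindrome condition makes `W` symmetric (`cfBlock_transpose`), which forces the two
diagonal entries of `B` to agree; hence `B` has trace `2 p_{l-1}`, and its determinant is
`(-1) ^ l`. By Cayley–Hamilton, the powers of `B` satisfy the recurrence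
`B ^ (k + 2) = 2 p_{l-1} B ^ (k + 1) - (-1) ^ l B ^ k`, which is that of the signed Chebyshev
polynomials evaluated at `p_{l-1}`; the initial values match as well.
-/

open Polynomial

/-- The signed Chebyshev polynomial of the first kind `T^l_k`:
equals `T_k` when `l` is even and `T̄_k` when `l` is odd. -/
noncomputable def chebTSigned (R : Type*) [CommRing R] (l k : ℕ) : Polynomial R :=
  if Even l then chebT R k else chebTBar R k

/-- The signed Chebyshev polynomial of the second kind `U^l_k`:
equals `U_k` when `l` is even and `Ū_k` when `l` is odd. -/
noncomputable def chebUSigned (R : Type*) [CommRing R] (l k : ℕ) : Polynomial R :=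
  if Even l then chebU R k else chebUBar R k

/-- The denominator `q_n` of the `n`-th convergent. -/
def cfQ {F : Type*} [Field F] (c : ℕ → F) (n : ℕ) : F := cfPsi c n 1 0

/-- The product `cfMat (c 0) * ⋯ * cfMat (c (n - 1))`, that is `Ψ_{n-1}`, including the empty
product `Ψ_{-1} = 1` for `n = 0`. -/
def cfPartial {F : Type*} [Field F] (c : ℕ → F) (n : ℕ) : Matrix (Fin 2) (Fin 2) F :=
  ((List.range n).map fun i => cfMat (c i)).prod

/-- The shear `[[1, a], [0, 1]]`. -/
def cfShear {F : Type*} [Field F] (a : F) : Matrix (Fin 2) (Fin 2) F := !![1, a; 0, 1]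

section

variable {F : Type*} [Field F]

lemma cfPartial_succ (c : ℕ → F) (n : ℕ) :
    cfPartial c (n + 1) = cfPartial c n * cfMat (c n) := by
  simp [cfPartial, List.range_succ]

lemma cfPartial_add (c : ℕ → F) (n m : ℕ) :
    cfPartial c (n + m) = cfPartial c n * cfPartial (fun i => c (n + i)) m := by
  simp [cfPartial, List.range_add, Function.comp_def]

lemma cfPartial_congr {c d : ℕ → F} {n : ℕ} (h : ∀ i < n, c i = d i) :
    cfPartial c n = cfPartial d n := by
  unfold cfPartial
  congr 1
  refine List.map_congr_left fun i hi => ?_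
  rw [h i (List.mem_range.mp hi)]

lemma cfPartial_succ_left (c : ℕ → F) (n : ℕ) :
    cfPartial c (n + 1) = cfMat (c 0) * cfPartial (fun i => c (i + 1)) n := by
  rw [add_comm, cfPartial_add]
  simp [cfPartial, add_comm]

lemma cfPartial_det (c : ℕ → F) (n : ℕ) : (cfPartial c n).det = (-1) ^ n := by
  induction n with
  | zero => simp [cfPartial]
  | succ n ih => rw [cfPartial_succ, Matrix.det_mul, ih, pow_succ]; simp [cfMat, Matrix.det_fin_two]

/-- Each `cfMat` is symmetric, so transposing a product of them reverses the order. -/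
lemma cfPartial_transpose (c : ℕ → F) (n : ℕ) :
    (cfPartial c n).transpose = cfPartial (fun i => c (n - 1 - i)) n := by
  induction n with
  | zero => simp [cfPartial]
  | succ n ih =>
    have hsymm : (cfMat (c n)).transpose = cfMat (c n) := by
      ext i j; fin_cases i <;> fin_cases j <;> rfl
    rw [cfPartial_succ, Matrix.transpose_mul, ih, cfPartial_succ_left, hsymm]
    congr 1
    refine cfPartial_congr fun i _ => ?_
    congr 1
    omega

lemma cfBlock_transpose (c : ℕ → F) (m : ℕ)
    (hpal : ∀ i, 1 ≤ i → i ≤ m → c (m + 1 - i) = c i) :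
    (cfPartial (fun i => c (i + 1)) m).transpose = cfPartial (fun i => c (i + 1)) m := by
  rw [cfPartial_transpose]
  refine cfPartial_congr fun i hi => ?_
  rw [← hpal (i + 1) (by omega) (by omega)]
  congr 1
  omega

lemma cfMat_two_mul (a : F) : cfMat (2 * a) = cfShear a * cfMat a := by
  simp [cfMat, cfShear, two_mul]

lemma cfPeriod {α : Type*} (c : ℕ → α) (l : ℕ) (hper : ∀ i, 1 ≤ i → c (i + l) = c i)
    (i k : ℕ) (hi : 1 ≤ i) : c (k * l + i) = c i := by
  induction k with
  | zero => simp
  | succ k ih => rw [← ih, ← hper (k * l + i) (by omega)]; congr 1; ring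

/-- The factor `cfMat (2 c_0)` opening each later block supplies the shear that closes the previous
one, so blocks of length `m + 1` assemble into a power. The last block has no successor, so its shear
is the one written on the left-hand side. -/
lemma cfPartial_mul_cfShear (c : ℕ → F) (m : ℕ)
    (hper : ∀ i, 1 ≤ i → c (i + (m + 1)) = c i) (hcl : c (m + 1) = 2 * c 0) (k : ℕ) :
    cfPartial c ((k + 1) * (m + 1)) * cfShear (c 0) =
      (cfPartial c (m + 1) * cfShear (c 0)) ^ (k + 1) := by
  induction k with
  | zero => simp
  | succ k ih =>
    have hblock : cfPartial (fun i => c ((k + 1) * (m + 1) + i)) (m + 1) =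
        cfShear (c 0) * cfPartial c (m + 1) := by
      have h0 : c ((k + 1) * (m + 1) + 0) = 2 * c 0 := by
        rw [← hcl, ← cfPeriod c (m + 1) hper (m + 1) k (by omega)]
        congr 1; ring
      rw [cfPartial_succ_left, cfPartial_succ_left c m, h0, cfMat_two_mul, Matrix.mul_assoc]
      congr 2
      exact cfPartial_congr fun i _ => cfPeriod c (m + 1) hper (i + 1) (k + 1) (by omega)
    rw [pow_succ, ← ih, add_mul (k + 1) 1, one_mul, cfPartial_add, hblock]
    simp only [Matrix.mul_assoc]

lemma mul_cfShear_col (M : Matrix (Fin 2) (Fin 2) F) (a : F) (i : Fin 2) :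
    (M * cfShear a) i 0 = M i 0 := by
  simp [cfShear, Matrix.mul_apply, Fin.sum_univ_two]

/-- Symmetry of the block `W` is what makes the diagonal of `cfMat a * W * cfShear a`
constant. -/
lemma block_diag (W : Matrix (Fin 2) (Fin 2) F) (hW : W.transpose = W) (a : F) :
    (cfMat a * W * cfShear a) 1 1 = (cfMat a * W * cfShear a) 0 0 := by
  have h : W 1 0 = W 0 1 := congrFun (congrFun hW 0) 1
  simp only [cfMat, cfShear, Matrix.mul_apply, Fin.sum_univ_two, Matrix.of_apply,
    Matrix.cons_val', Matrix.cons_val_zero, Matrix.cons_val_one, Matrix.cons_val_fin_one, h]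
  ring

/-- Cayley–Hamilton for a `2 × 2` matrix with constant diagonal. -/
lemma sq_of_diag (B : Matrix (Fin 2) (Fin 2) F) (h : B 1 1 = B 0 0) :
    B ^ 2 = (2 * B 0 0) • B - B.det • (1 : Matrix (Fin 2) (Fin 2) F) := by
  rw [sq]
  ext i j
  fin_cases i <;> fin_cases j <;>
    simp [Matrix.mul_apply, Fin.sum_univ_two, Matrix.det_fin_two, h] <;> ring

lemma pow_entry_rec (B : Matrix (Fin 2) (Fin 2) F) (h : B 1 1 = B 0 0) (k : ℕ) (i : Fin 2) :
    (B ^ (k + 2)) i 0 = 2 * B 0 0 * (B ^ (k + 1)) i 0 - B.det * (B ^ k) i 0 := by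
  rw [pow_add, sq_of_diag B h, mul_sub, Matrix.mul_smul, Matrix.mul_smul, ← pow_succ, mul_one]
  simp

lemma pow_entry_of_det_one (B : Matrix (Fin 2) (Fin 2) F) (h : B 1 1 = B 0 0)
    (hd : B.det = 1) (k : ℕ) :
    (B ^ k) 0 0 = (chebT F k).eval (B 0 0) ∧
      (B ^ (k + 1)) 1 0 = B 1 0 * (chebU F k).eval (B 0 0) := by
  induction k using Nat.twoStepInduction with
  | zero => simp [chebT, chebU]
  | one =>
    rw [pow_entry_rec B h 0 1]
    simp [chebT, chebU]
    ring
  | more k ih1 ih2 =>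
    rw [pow_entry_rec B h k 0, pow_entry_rec B h (k + 1) 1, ih1.1, ih2.1, ih1.2, ih2.2, hd]
    simp [chebT, chebU]
    ring

lemma pow_entry_of_det_neg_one (B : Matrix (Fin 2) (Fin 2) F) (h : B 1 1 = B 0 0)
    (hd : B.det = -1) (k : ℕ) :
    (B ^ k) 0 0 = (chebTBar F k).eval (B 0 0) ∧
      (B ^ (k + 1)) 1 0 = B 1 0 * (chebUBar F k).eval (B 0 0) := by
  induction k using Nat.twoStepInduction with
  | zero => simp [chebTBar, chebUBar]
  | one =>
    rw [pow_entry_rec B h 0 1]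
    simp [chebTBar, chebUBar]
    ring
  | more k ih1 ih2 =>
    rw [pow_entry_rec B h k 0, pow_entry_rec B h (k + 1) 1, ih1.1, ih2.1, ih1.2, ih2.2, hd]
    simp [chebTBar, chebUBar]
    ring

lemma pow_entry_signed (B : Matrix (Fin 2) (Fin 2) F) (h : B 1 1 = B 0 0) (l : ℕ)
    (hd : B.det = (-1) ^ l) (k : ℕ) :
    (B ^ k) 0 0 = (chebTSigned F l k).eval (B 0 0) ∧
      (B ^ (k + 1)) 1 0 = B 1 0 * (chebUSigned F l k).eval (B 0 0) := by
  unfold chebTSigned chebUSigned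
  split_ifs with he
  · exact pow_entry_of_det_one B h (by rw [hd, he.neg_one_pow]) k
  · exact pow_entry_of_det_neg_one B h
      (by rw [hd, (Nat.not_even_iff_odd.mp he).neg_one_pow]) k

end

/-- For a purely periodic palindromic expansion of the form `√N`-type
(`c_{i+l} = c_i` for `i ≥ 1`, `c_{l−i} = c_i` for `1 ≤ i ≤ l−1`, `c_l = 2c_0`), the
decimated convergents are signed Chebyshev sequences:
`p_{kl−1} = T^l_k(p_{l−1})` and `q_{kl−1} = q_{l−1}·U^l_{k−1}(p_{l−1})` for `k ≥ 1`. -/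
theorem cfPsi_decimation_chebSigned {F : Type*} [Field F] (c : ℕ → F) (l : ℕ) (hl : 2 ≤ l)
    (hper : ∀ i, 1 ≤ i → c (i + l) = c i)
    (hpal : ∀ i, 1 ≤ i → i ≤ l - 1 → c (l - i) = c i) (hcl : c l = 2 * c 0)
    (k : ℕ) (hk : 1 ≤ k) :
    cfP c (k * l - 1) = (chebTSigned F l k).eval (cfP c (l - 1)) ∧
    cfQ c (k * l - 1) = cfQ c (l - 1) * (chebUSigned F l (k - 1)).eval (cfP c (l - 1)) := by
  obtain ⟨m, rfl⟩ : ∃ m, l = m + 1 := ⟨l - 1, by omega⟩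
  obtain ⟨k, rfl⟩ : ∃ n, k = n + 1 := ⟨k - 1, by omega⟩
  have hpsi : ∀ j, cfPsi c ((j + 1) * (m + 1) - 1) = cfPartial c ((j + 1) * (m + 1)) := by
    intro j
    have hpos : 0 < (j + 1) * (m + 1) := by positivity
    rw [cfPsi, cfPartial, Nat.sub_add_cancel hpos]
  set B := cfPartial c (m + 1) * cfShear (c 0) with hB
  have hdiag : B 1 1 = B 0 0 := by
    rw [hB, cfPartial_succ_left]
    exact block_diag _ (cfBlock_transpose c m hpal) _
  have hdet : B.det = (-1) ^ (m + 1) := by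
    rw [hB, Matrix.det_mul, cfPartial_det]
    simp [cfShear, Matrix.det_fin_two]
  have hcol : ∀ j i, cfPsi c ((j + 1) * (m + 1) - 1) i 0 = (B ^ (j + 1)) i 0 := by
    intro j i
    rw [hpsi, ← cfPartial_mul_cfShear c m hper hcl, mul_cfShear_col]
  have hone : ∀ i, cfPsi c (m + 1 - 1) i 0 = B i 0 := by
    intro i
    simpa using hcol 0 i
  unfold cfP cfQ
  rw [hcol, hcol, hone, hone]
  exact ⟨(pow_entry_signed B hdiag _ hdet (k + 1)).1, (pow_entry_signed B hdiag _ hdet k).2⟩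
end

section
/- Let F be a field, let c : ℕ → F, let l ≥ 2 be a natural number such that c_{i+l} = c_i for all i ≥ 1, c_{l−i} = c_i for all 1 ≤ i ≤ l−1 (palindromic period), and c_l = 2c_0. Let Ψ_n denote the product [[c_0,1],[1,0]]·[[c_1,1],[1,0]]⋯[[c_n,1],[1,0]], with Ψ_{−1} the identity matrix, and write p_n = (Ψ_n)_{1,1}, q_n = (Ψ_n)_{2,1} for n ≥ −1. Then for all n ≥ −1, p_{n+2l} = 2·p_{l−1}·p_{n+l} − (−1)^l·p_n and q_{n+2l} = 2·p_{l−1}·q_{n+l} − (−1)^l·q_n. -/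
/-- `Φ_m = Ψ_{m−1}`: the shifted matrix of convergents, with `Φ_0 = Ψ_{−1} = 1` the
identity matrix and `Φ_{m+1} = Φ_m·[[c_m,1],[1,0]]`, so that
`Φ_{n+1} = Ψ_n = [[c_0,1],[1,0]]·[[c_1,1],[1,0]]⋯[[c_n,1],[1,0]]`. -/
def cfPhi {F : Type*} [Field F] (c : ℕ → F) : ℕ → Matrix (Fin 2) (Fin 2) F
  | 0 => 1
  | m + 1 => cfPhi c m * cfMat (c m)

/-- `p_n = (Ψ_n)_{1,1}` for `n ≥ −1`, indexed so that `cfPShift c (n+1) = p_n`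
(in particular `cfPShift c 0 = p_{−1} = 1`). -/
def cfPShift {F : Type*} [Field F] (c : ℕ → F) (m : ℕ) : F := cfPhi c m 0 0

/-- `q_n = (Ψ_n)_{2,1}` for `n ≥ −1`, indexed so that `cfQShift c (n+1) = q_n`
(in particular `cfQShift c 0 = q_{−1} = 0`). -/
def cfQShift {F : Type*} [Field F] (c : ℕ → F) (m : ℕ) : F := cfPhi c m 1 0

open Matrix

theorem cfPhi_congr {F : Type*} [Field F] {c d : ℕ → F} (k : ℕ) (h : ∀ i < k, c i = d i) :
    cfPhi c k = cfPhi d k := by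
  induction k with
  | zero => rfl
  | succ k ih =>
    rw [cfPhi, cfPhi, ih fun i hi => h i (by omega), h k (by omega)]

theorem cfPhi_succ_left {F : Type*} [Field F] (c : ℕ → F) (k : ℕ) :
    cfPhi c (k + 1) = cfMat (c 0) * cfPhi (fun i => c (i + 1)) k := by
  induction k with
  | zero => simp [cfPhi]
  | succ k ih => rw [cfPhi, ih, cfPhi, Matrix.mul_assoc]

/-- Transposing a product of the symmetric matrices `cfMat` reverses the order of its factors. -/
theorem cfPhi_transpose {F : Type*} [Field F] (c : ℕ → F) (k : ℕ) :
    (cfPhi c k)ᵀ = cfPhi (fun i => c (k - 1 - i)) k := by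
  induction k with
  | zero => simp [cfPhi]
  | succ k ih =>
    have hM : (cfMat (c k))ᵀ = cfMat (c k) := by
      ext i j; fin_cases i <;> fin_cases j <;> simp [cfMat]
    rw [cfPhi, Matrix.transpose_mul, ih, hM, cfPhi_succ_left]
    congr 1
    apply cfPhi_congr
    intro i _
    congr 1
    omega

theorem cfPhi_det {F : Type*} [Field F] (c : ℕ → F) (k : ℕ) :
    (cfPhi c k).det = (-1) ^ k := by
  induction k with
  | zero => simp [cfPhi]
  | succ k ih => rw [cfPhi, Matrix.det_mul, ih]; simp [cfMat, Matrix.det_fin_two, pow_succ]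

/-- A shift of the index by the period `l` is left multiplication by the fixed matrix `Φ_l * T`. -/
theorem cfPhi_add_period {F : Type*} [Field F] (c : ℕ → F) (l : ℕ)
    (hper : ∀ i, 1 ≤ i → c (i + l) = c i) (hcl : c l = 2 * c 0) (m : ℕ) :
    cfPhi c (m + 1 + l) = cfPhi c l * !![1, c 0; 0, 1] * cfPhi c (m + 1) := by
  induction m with
  | zero =>
    have hT : cfMat (c l) = !![1, c 0; 0, 1] * cfMat (c 0) := by
      rw [hcl]
      ext i j; fin_cases i <;> fin_cases j <;> simp [cfMat, two_mul]
    rw [show 0 + 1 + l = l + 1 by omega, cfPhi, hT]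
    simp [cfPhi, Matrix.mul_assoc]
  | succ m ih =>
    rw [show m + 1 + 1 + l = (m + 1 + l) + 1 by omega, cfPhi, ih, hper (m + 1) (by omega),
      cfPhi.eq_2 c (m + 1), Matrix.mul_assoc]

/-- The first columns satisfy `v_{m+l} = Φ_l * T * v_m` for every `m`, including `m = 0`. -/
theorem cfShift_add_period {F : Type*} [Field F] (c : ℕ → F) (l : ℕ)
    (hper : ∀ i, 1 ≤ i → c (i + l) = c i) (hcl : c l = 2 * c 0) (m : ℕ) (i : Fin 2) :
    cfPhi c (m + l) i 0 = cfPhi c l i 0 * cfPhi c m 0 0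
      + (cfPhi c l i 0 * c 0 + cfPhi c l i 1) * cfPhi c m 1 0 := by
  cases m with
  | zero => simp [cfPhi]
  | succ m =>
    rw [cfPhi_add_period c l hper hcl]
    simp [Matrix.mul_apply, Fin.sum_univ_two]

/-- The palindrome condition makes the two diagonal entries of `Φ_l * T` equal. -/
theorem cfPhi_palindrome {F : Type*} [Field F] (c : ℕ → F) (l : ℕ) (hl : 2 ≤ l)
    (hpal : ∀ i, 1 ≤ i → i ≤ l - 1 → c (l - i) = c i) :
    cfPhi c l 1 0 * c 0 + cfPhi c l 1 1 = cfPhi c l 0 0 := by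
  obtain ⟨k, rfl⟩ : ∃ k, l = k + 1 := ⟨l - 1, by omega⟩
  have hsymm : (cfPhi (fun i => c (i + 1)) k)ᵀ = cfPhi (fun i => c (i + 1)) k := by
    rw [cfPhi_transpose]
    apply cfPhi_congr
    intro i hi
    rw [← hpal (i + 1) (by omega) (by omega)]
    congr 1
    omega
  have h01 := congrFun (congrFun hsymm 0) 1
  rw [Matrix.transpose_apply] at h01
  rw [cfPhi_succ_left]
  simp only [cfMat, Matrix.mul_apply, Fin.sum_univ_two, Matrix.of_apply, Matrix.cons_val',
    Matrix.cons_val_zero, Matrix.cons_val_one, Matrix.cons_val_fin_one]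
  linear_combination -h01

/-- For a purely periodic palindromic expansion of the form `√N`-type
(`c_{i+l} = c_i` for `i ≥ 1`, `c_{l−i} = c_i` for `1 ≤ i ≤ l−1`, `c_l = 2c_0`),
the convergents satisfy, for all `n ≥ −1` (here `m = n + 1` ranges over `ℕ`):
`p_{n+2l} = 2·p_{l−1}·p_{n+l} − (−1)^l·p_n` and
`q_{n+2l} = 2·p_{l−1}·q_{n+l} − (−1)^l·q_n`. -/
theorem cf_convergents_recurrence {F : Type*} [Field F] (c : ℕ → F) (l : ℕ) (hl : 2 ≤ l)
    (hper : ∀ i, 1 ≤ i → c (i + l) = c i)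
    (hpal : ∀ i, 1 ≤ i → i ≤ l - 1 → c (l - i) = c i) (hcl : c l = 2 * c 0)
    (m : ℕ) :
    cfPShift c (m + 2 * l) =
      2 * cfPShift c l * cfPShift c (m + l) - (-1) ^ l * cfPShift c m ∧
    cfQShift c (m + 2 * l) =
      2 * cfPShift c l * cfQShift c (m + l) - (-1) ^ l * cfQShift c m := by
  have hdet := cfPhi_det c l
  rw [Matrix.det_fin_two] at hdet
  have htr := cfPhi_palindrome c l hl hpal
  have h1 := cfShift_add_period c l hper hcl m
  have h2 := cfShift_add_period c l hper hcl (m + l)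
  rw [show m + l + l = m + 2 * l by omega] at h2
  simp only [cfPShift, cfQShift]
  rw [← hdet, h2 0, h2 1, h1 0, h1 1, htr]
  have hq : cfPhi c l 1 1 = cfPhi c l 0 0 - cfPhi c l 1 0 * c 0 := by
    linear_combination htr
  rw [hq]
  constructor <;> ring
end

section
/- Let N be a real number, let l be a natural number, let d ≥ 1 be a natural number, and let f : ℝ → ℝ be given by f(x) = x² − N. Let p, q be real numbers with q ≠ 0 and p² − N·q² = (−1)^l, and suppose that the d-th derivative of 1/f at p/q is nonzero and that q·U^l_d(p) ≠ 0. Then the Householder iterate H(p/q) = p/q + d · ((1/f)^{(d−1)}(p/q)) / ((1/f)^{(d)}(p/q)) equals T^l_{d+1}(p) / (q·U^l_d(p)), where (1/f)^{(m)} denotes the m-th derivative of the function x ↦ 1/f(x). -/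
/-!
Write `g = 1 / (x² - N)`. Differentiating `(x² - N) g = 1` repeatedly gives the three-term recurrence
`(x² - N) g⁽ⁿ⁺²⁾ + 2(n+2) x g⁽ⁿ⁺¹⁾ + (n+2)(n+1) g⁽ⁿ⁾ = 0` wherever `x² ≠ N`
(`iteratedDeriv_recurrence`). At `x = p/q` one has `x² - N = s/q²` with `s = (-1)^l`, and after dividing
by `(n+2)!` and rescaling this becomes the recurrence `u (n+2) = 2p u (n+1) - s u n` of the signed
Chebyshev polynomials of the second kind. Hence
`g⁽ⁿ⁾(p/q) = n! (-1)ⁿ sⁿ⁺¹ qⁿ⁺² Uˡₙ(p)` (`iteratedDeriv_eq_chebU`), so that the Householder iterate is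
`(p Uˡ_d(p) - s Uˡ_{d-1}(p)) / (q Uˡ_d(p))`, whose numerator is `Tˡ_{d+1}(p)`
(`chebTSigned_eq`).
-/

open Polynomial

theorem chebUSigned_eval_succ_succ (l n : ℕ) (p : ℝ) :
    (chebUSigned ℝ l (n + 2)).eval p =
      2 * p * (chebUSigned ℝ l (n + 1)).eval p - (-1) ^ l * (chebUSigned ℝ l n).eval p := by
  rcases Nat.even_or_odd l with h | h
  · simp [chebUSigned, h, chebU, h.neg_one_pow]
  · simp [chebUSigned, Nat.not_even_iff_odd.mpr h, chebUBar, h.neg_one_pow]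

theorem chebTSigned_eval_succ_succ (l n : ℕ) (p : ℝ) :
    (chebTSigned ℝ l (n + 2)).eval p =
      2 * p * (chebTSigned ℝ l (n + 1)).eval p - (-1) ^ l * (chebTSigned ℝ l n).eval p := by
  rcases Nat.even_or_odd l with h | h
  · simp [chebTSigned, h, chebT, h.neg_one_pow]
  · simp [chebTSigned, Nat.not_even_iff_odd.mpr h, chebTBar, h.neg_one_pow]

theorem chebUSigned_eval_zero (l : ℕ) (p : ℝ) : (chebUSigned ℝ l 0).eval p = 1 := by
  unfold chebUSigned; split_ifs <;> simp [chebU, chebUBar]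

theorem chebUSigned_eval_one (l : ℕ) (p : ℝ) : (chebUSigned ℝ l 1).eval p = 2 * p := by
  unfold chebUSigned; split_ifs <;> simp [chebU, chebUBar]

theorem chebTSigned_eval_zero (l : ℕ) (p : ℝ) : (chebTSigned ℝ l 0).eval p = 1 := by
  unfold chebTSigned; split_ifs <;> simp [chebT, chebTBar]

theorem chebTSigned_eval_one (l : ℕ) (p : ℝ) : (chebTSigned ℝ l 1).eval p = p := by
  unfold chebTSigned; split_ifs <;> simp [chebT, chebTBar]

/-- The signed version of the classical identity `T_{n+2} = x U_{n+1} - U_n`. -/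
theorem chebTSigned_eq (l n : ℕ) (p : ℝ) :
    (chebTSigned ℝ l (n + 2)).eval p =
      p * (chebUSigned ℝ l (n + 1)).eval p - (-1) ^ l * (chebUSigned ℝ l n).eval p := by
  induction n using Nat.twoStepInduction with
  | zero =>
    rw [chebTSigned_eval_succ_succ, chebTSigned_eval_one, chebTSigned_eval_zero,
      chebUSigned_eval_one, chebUSigned_eval_zero]
    ring
  | one =>
    rw [chebTSigned_eval_succ_succ, chebTSigned_eval_succ_succ, chebTSigned_eval_one,
      chebTSigned_eval_zero, chebUSigned_eval_succ_succ, chebUSigned_eval_one,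
      chebUSigned_eval_zero]
    ring
  | more n h0 h1 =>
    rw [chebTSigned_eval_succ_succ, h1, h0, chebUSigned_eval_succ_succ l (n + 1),
      chebUSigned_eval_succ_succ l n]
    ring

theorem hasDerivAt_iteratedDeriv (N x : ℝ) (hx : x ^ 2 - N ≠ 0) (n : ℕ) :
    HasDerivAt (iteratedDeriv n (fun x : ℝ => 1 / (x ^ 2 - N)))
      (iteratedDeriv (n + 1) (fun x : ℝ => 1 / (x ^ 2 - N)) x) x := by
  have h : AnalyticAt ℝ (fun x : ℝ => 1 / (x ^ 2 - N)) x := by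
    have : AnalyticAt ℝ (fun x : ℝ => x ^ 2 - N) x := by fun_prop
    exact analyticAt_const.div this hx
  rw [iteratedDeriv_succ]
  exact ((iteratedDeriv_eq_iterate (n := n) (f := fun x : ℝ => 1 / (x ^ 2 - N))) ▸ h.iterated_deriv n).differentiableAt.hasDerivAt

theorem eventually_sq_sub_ne (N x : ℝ) (hx : x ^ 2 - N ≠ 0) :
    ∀ᶠ y in nhds x, y ^ 2 - N ≠ 0 :=
  ContinuousAt.eventually_ne (g := fun y : ℝ => y ^ 2 - N) (by fun_prop) hx

theorem hasDerivAt_sq_sub (N x : ℝ) : HasDerivAt (fun y : ℝ => y ^ 2 - N) (2 * x) x := by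
  simpa using (hasDerivAt_pow 2 x).sub_const N

theorem iteratedDeriv_one_relation (N x : ℝ) (hx : x ^ 2 - N ≠ 0) :
    (x ^ 2 - N) * iteratedDeriv 1 (fun x : ℝ => 1 / (x ^ 2 - N)) x +
      2 * x * iteratedDeriv 0 (fun x : ℝ => 1 / (x ^ 2 - N)) x = 0 := by
  have h := (hasDerivAt_sq_sub N x).mul (hasDerivAt_iteratedDeriv N x hx 0)
  have h1 : HasDerivAt ((fun y : ℝ => y ^ 2 - N) *
      iteratedDeriv 0 (fun x : ℝ => 1 / (x ^ 2 - N))) 0 x := by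
    refine (hasDerivAt_const x (1 : ℝ)).congr_of_eventuallyEq ?_
    filter_upwards [eventually_sq_sub_ne N x hx] with y hy
    simp [hy]
  linarith [h.unique h1]

/-- Each step differentiates the previous relation, which holds on a neighbourhood of `x`. -/
theorem iteratedDeriv_recurrence (N : ℝ) (n : ℕ) : ∀ x : ℝ, x ^ 2 - N ≠ 0 →
    (x ^ 2 - N) * iteratedDeriv (n + 2) (fun x : ℝ => 1 / (x ^ 2 - N)) x +
      2 * (n + 2) * x * iteratedDeriv (n + 1) (fun x : ℝ => 1 / (x ^ 2 - N)) x +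
      (n + 2) * (n + 1) * iteratedDeriv n (fun x : ℝ => 1 / (x ^ 2 - N)) x = 0 := by
  induction n with
  | zero =>
    intro x hx
    have h := ((hasDerivAt_sq_sub N x).mul (hasDerivAt_iteratedDeriv N x hx 1)).add
      (((hasDerivAt_id x).const_mul 2).mul (hasDerivAt_iteratedDeriv N x hx 0))
    have h1 := (hasDerivAt_const x (0 : ℝ)).congr_of_eventuallyEq
      ((eventually_sq_sub_ne N x hx).mono fun y hy => iteratedDeriv_one_relation N y hy)
    have h2 := h.unique h1
    simp only [id, zero_add, Nat.cast_zero] at h2 ⊢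
    linarith
  | succ n ih =>
    intro x hx
    have h := (((hasDerivAt_sq_sub N x).mul (hasDerivAt_iteratedDeriv N x hx (n + 2))).add
      (((hasDerivAt_id x).const_mul (2 * ((n : ℝ) + 2))).mul
        (hasDerivAt_iteratedDeriv N x hx (n + 1)))).add
      ((hasDerivAt_iteratedDeriv N x hx n).const_mul (((n : ℝ) + 2) * (n + 1)))
    have h1 := (hasDerivAt_const x (0 : ℝ)).congr_of_eventuallyEq
      ((eventually_sq_sub_ne N x hx).mono fun y hy => ih y hy)
    have h2 := h.unique h1
    simp only [id] at h2
    push_cast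
    linarith

theorem iteratedDeriv_eq_chebU (N : ℝ) (l : ℕ) (p q : ℝ) (hq : q ≠ 0)
    (hpell : p ^ 2 - N * q ^ 2 = (-1) ^ l) (n : ℕ) :
    iteratedDeriv n (fun x : ℝ => 1 / (x ^ 2 - N)) (p / q) =
      n.factorial * (-1) ^ n * ((-1) ^ l) ^ (n + 1) * q ^ (n + 2) *
        (chebUSigned ℝ l n).eval p := by
  have hs : ((-1 : ℝ) ^ l) * (-1) ^ l = 1 := by rw [← mul_pow]; simp
  have hF : (p / q) ^ 2 - N = (-1) ^ l / q ^ 2 := by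
    rw [← hpell]; field_simp
  have hrec := fun n => chebUSigned_eval_succ_succ l n p
  generalize (-1 : ℝ) ^ l = s at *
  have hs0 : s ≠ 0 := left_ne_zero_of_mul_eq_one hs
  have hx : (p / q) ^ 2 - N ≠ 0 := by rw [hF]; positivity
  -- Since `s² = 1`, multiplying by `s q²` inverts `x² - N = s / q²`.
  have hinv : s * q ^ 2 * ((p / q) ^ 2 - N) = 1 := by
    rw [hF]; field_simp; linarith
  have hpq : q * (p / q) = p := by field_simp
  have h0 : iteratedDeriv 0 (fun x : ℝ => 1 / (x ^ 2 - N)) (p / q) = s * q ^ 2 := by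
    rw [iteratedDeriv_zero, div_eq_iff hx, hinv]
  induction n using Nat.twoStepInduction with
  | zero => rw [h0, chebUSigned_eval_zero]; simp
  | one =>
    have h := iteratedDeriv_one_relation N (p / q) hx
    rw [h0] at h
    rw [chebUSigned_eval_one]
    generalize iteratedDeriv 1 (fun x : ℝ => 1 / (x ^ 2 - N)) (p / q) = a at *
    simp only [Nat.factorial_one, Nat.cast_one]
    linear_combination s * q ^ 2 * h - a * hinv - 2 * s ^ 2 * q ^ 3 * hpq
  | more n ih0 ih1 =>
    have h := iteratedDeriv_recurrence N n (p / q) hx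
    rw [ih0, ih1] at h
    rw [hrec n]
    generalize iteratedDeriv (n + 2) (fun x : ℝ => 1 / (x ^ 2 - N)) (p / q) = a at *
    generalize eval p (chebUSigned ℝ l (n + 1)) = u1 at *
    generalize eval p (chebUSigned ℝ l n) = u0 at *
    simp only [Nat.factorial_succ, pow_succ (n := n + 1), pow_succ (n := n)] at h ⊢
    push_cast at h ⊢
    generalize (n.factorial : ℝ) = k at *
    generalize (-1 : ℝ) ^ n = e at *
    simp only [pow_succ] at h ⊢
    linear_combination s * q ^ 2 * h - a * hinv +
      2 * (n + 2) * (n + 1) * k * e * s ^ n * s ^ 3 * q ^ n * q ^ 4 * u1 * hpq +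
      (n + 2) * (n + 1) * k * e * s ^ n * s ^ 2 * q ^ n * q ^ 4 * u0 * hs

/-- Householder's method of order `d` applied to `f(x) = x² − N` at a convergent `p/q`
of `√N` satisfying the Pell-type equation `p² − N·q² = (−1)^l` yields
`H(p/q) = T^l_{d+1}(p)/(q·U^l_d(p))`. -/
theorem householder_eq_chebSigned (N : ℝ) (l d : ℕ) (hd : 1 ≤ d) (p q : ℝ) (hq : q ≠ 0)
    (hpell : p ^ 2 - N * q ^ 2 = (-1) ^ l)
    (hder : iteratedDeriv d (fun x : ℝ => 1 / (x ^ 2 - N)) (p / q) ≠ 0)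
    (hU : q * (chebUSigned ℝ l d).eval p ≠ 0) :
    p / q + (d : ℝ) *
        (iteratedDeriv (d - 1) (fun x : ℝ => 1 / (x ^ 2 - N)) (p / q) /
          iteratedDeriv d (fun x : ℝ => 1 / (x ^ 2 - N)) (p / q)) =
      (chebTSigned ℝ l (d + 1)).eval p / (q * (chebUSigned ℝ l d).eval p) := by
  obtain ⟨n, rfl⟩ : ∃ n, d = n + 1 := ⟨d - 1, by omega⟩
  have hu : (chebUSigned ℝ l (n + 1)).eval p ≠ 0 := right_ne_zero_of_mul hU
  have hs : ((-1 : ℝ) ^ l) * (-1) ^ l = 1 := by rw [← mul_pow]; simp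
  rw [Nat.add_sub_cancel, iteratedDeriv_eq_chebU N l p q hq hpell n,
    iteratedDeriv_eq_chebU N l p q hq hpell (n + 1), chebTSigned_eq]
  generalize (-1 : ℝ) ^ l = s at *
  have hs0 : s ≠ 0 := left_ne_zero_of_mul_eq_one hs
  generalize eval p (chebUSigned ℝ l (n + 1)) = u1 at *
  generalize eval p (chebUSigned ℝ l n) = u0 at *
  have hk : (n.factorial : ℝ) ≠ 0 := by positivity
  have hn : (n : ℝ) + 1 ≠ 0 := by positivity
  rw [Nat.factorial_succ]
  push_cast
  have he : (-1 : ℝ) ^ n ≠ 0 := by simp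
  rw [pow_succ (-1 : ℝ) n]
  generalize (-1 : ℝ) ^ n = e at *
  have key : ((n : ℝ) + 1) * (n.factorial * e * s ^ (n + 1) * q ^ (n + 2) * u0 /
      ((n + 1) * n.factorial * (e * -1) * s ^ (n + 1 + 1) * q ^ (n + 1 + 2) * u1)) =
      - (s * u0) / (q * u1) := by
    rw [← mul_div_assoc, div_eq_div_iff (by simp [*]) (by simp [*])]
    linear_combination (-((n : ℝ) + 1) * n.factorial * e * s ^ (n + 1) * q ^ (n + 3) * u0 * u1) * hs
  rw [key]
  field_simp
  ring
end

section
/- For all natural numbers m and l, the four polynomial identities hold: T^l_{2m+1}(x) = 2·T^l_m(x)·T^l_{m+1}(x) − (−1)^{ml}·x; T^l_{2m}(x) = 2·T^l_m(x)² − (−1)^{ml}; U^l_{2m+1}(x) = 2·T^l_m(x)·U^l_{m+1}(x) − (−1)^{ml}·2x; and U^l_{2m}(x) = 2·T^l_m(x)·U^l_m(x) − (−1)^{ml}. -/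
/-!
Both families satisfy the single recurrence `a_{k+2} = 2x·a_{k+1} − ε·a_k` with `ε = (−1)^l`.
If `α, β` are the roots of `z² − 2xz + ε`, then `2·T^l_m = α^m + β^m` and `αβ = ε`, so multiplying
any solution `a_{m+n}` of the recurrence by `2·T^l_m` gives `a_{2m+n} + ε^m·a_n`. This product
formula, `two_mul_mul_of_recurrence`, is proved without the roots, by induction on `m`; the four
identities are its cases `n = 1` and `n = 0` for `a = T^l` and `a = U^l`.
-/

open Polynomial

/-- The product formula `2·t_m·a_{m+n} = a_{2m+n} + e^m·a_n`, for an arbitrary solution `a` of the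
recurrence and the solution `t` with `t_0 = 1`, `2·t_1 = p`. Leaving `n` free is what makes the
two-step induction on `m` close. -/
theorem two_mul_mul_of_recurrence {A : Type*} [CommRing A] {p e : A} {t a : ℕ → A}
    (ht0 : t 0 = 1) (ht1 : 2 * t 1 = p) (ht : ∀ k, t (k + 2) = p * t (k + 1) - e * t k)
    (ha : ∀ k, a (k + 2) = p * a (k + 1) - e * a k) (m n : ℕ) :
    2 * t m * a (m + n) = a (2 * m + n) + e ^ m * a n := by
  induction m using Nat.twoStepInduction generalizing n with
  | zero => simp only [ht0, mul_zero, zero_add, pow_zero]; ring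
  | one =>
    rw [ht1, show 2 * 1 + n = n + 2 by ring, ha, add_comm 1 n]
    ring
  | more m ih0 ih1 =>
    have h0 := ih0 (n + 2)
    have h1 := ih1 (n + 1)
    rw [show m + (n + 2) = m + 2 + n by ring, show 2 * m + (n + 2) = 2 * m + n + 2 by ring] at h0
    rw [show m + 1 + (n + 1) = m + 2 + n by ring,
      show 2 * (m + 1) + (n + 1) = 2 * m + n + 2 + 1 by ring] at h1
    rw [show 2 * (m + 2) + n = 2 * m + n + 2 + 2 by ring, ht, ha (2 * m + n + 2)]
    linear_combination p * h1 - e * h0 - e ^ (m + 1) * ha n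

theorem chebTSigned_add_two (R : Type*) [CommRing R] (l k : ℕ) :
    chebTSigned R l (k + 2) =
      2 * X * chebTSigned R l (k + 1) - (-1) ^ l * chebTSigned R l k := by
  by_cases h : Even l
  · simp [chebTSigned, h, chebT]
  · simp [chebTSigned, h, chebTBar, (Nat.not_even_iff_odd.mp h).neg_one_pow]

theorem chebUSigned_add_two (R : Type*) [CommRing R] (l k : ℕ) :
    chebUSigned R l (k + 2) =
      2 * X * chebUSigned R l (k + 1) - (-1) ^ l * chebUSigned R l k := by
  by_cases h : Even l
  · simp [chebUSigned, h, chebU]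
  · simp [chebUSigned, h, chebUBar, (Nat.not_even_iff_odd.mp h).neg_one_pow]

/-- The halve-and-square identities for signed Chebyshev polynomials:
`T^l_{2m+1} = 2·T^l_m·T^l_{m+1} − (−1)^{ml}·x`, `T^l_{2m} = 2·(T^l_m)² − (−1)^{ml}`,
`U^l_{2m+1} = 2·T^l_m·U^l_{m+1} − (−1)^{ml}·2x`, `U^l_{2m} = 2·T^l_m·U^l_m − (−1)^{ml}`. -/
theorem chebSigned_halve_and_square {R : Type*} [CommRing R] (m l : ℕ) :
    chebTSigned R l (2 * m + 1) =
      2 * chebTSigned R l m * chebTSigned R l (m + 1) - (-1) ^ (m * l) * X ∧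
    chebTSigned R l (2 * m) = 2 * chebTSigned R l m ^ 2 - (-1) ^ (m * l) ∧
    chebUSigned R l (2 * m + 1) =
      2 * chebTSigned R l m * chebUSigned R l (m + 1) - (-1) ^ (m * l) * (2 * X) ∧
    chebUSigned R l (2 * m) = 2 * chebTSigned R l m * chebUSigned R l m - (-1) ^ (m * l) := by
  have hT0 : chebTSigned R l 0 = 1 := by simp [chebTSigned, chebT, chebTBar]
  have hT1 : chebTSigned R l 1 = X := by simp [chebTSigned, chebT, chebTBar]
  have hU0 : chebUSigned R l 0 = 1 := by simp [chebUSigned, chebU, chebUBar]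
  have hU1 : chebUSigned R l 1 = 2 * X := by simp [chebUSigned, chebU, chebUBar]
  have hT := two_mul_mul_of_recurrence hT0 (congrArg (2 * ·) hT1) (chebTSigned_add_two R l)
    (chebTSigned_add_two R l) m
  have hU := two_mul_mul_of_recurrence hT0 (congrArg (2 * ·) hT1) (chebTSigned_add_two R l)
    (chebUSigned_add_two R l) m
  rw [mul_comm m l, pow_mul]
  refine ⟨?_, ?_, ?_, ?_⟩
  · rw [hT 1, hT1]; ring
  · have h := hT 0
    rw [hT0, add_zero, add_zero] at h
    linear_combination -h
  · rw [hU 1, hU1]; ring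
  · have h := hU 0
    rw [hU0, add_zero, add_zero] at h
    linear_combination -h
end
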